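/- High-to-low energy transfer lower bound for the first Picard iterate in H^s: let k ≥ 2 be an integer and s < 0. There exist constants c > 0 and δ > 0, depending only on k and s, such that for all R > 0, all A ≥ 1, all N with A ≤ δ·N, and all T with 0 < T ≤ δ, one has ‖⟨ξ⟩^s Ξ̂₁(φ̂, 0)(T)‖_{L²(ℝ)} ≥ c·R^k·T²·A^{k − 1/2 + s}, where φ̂ = R·χ_Ω and Ξ̂₁(φ̂, 0)(T,ξ) = ∫₀ᵀ sin((T−t')λ(ξ))·λ(ξ)·((cos(t'λ(·))·φ̂)^{∗k})(ξ) dt' is the k-fold self-convolution Duhamel term. -/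

import Mathlib

open MeasureTheory Filter
open scoped ENNReal

noncomputable section

/-- The Japanese bracket weight `⟨ξ⟩^s = (1+ξ²)^(s/2)`. -/
def jbw (s ξ : ℝ) : ℝ := (1 + ξ ^ 2) ^ (s / 2)

/-- `λ(ξ) = |ξ|/⟨ξ⟩`. -/
def lam (ξ : ℝ) : ℝ := |ξ| / (1 + ξ ^ 2) ^ ((1 : ℝ) / 2)

/-- The multiplier `m(t,ξ) = sin(tλ(ξ))/λ(ξ)` for `ξ ≠ 0`, `m(t,0) = t`. -/
def mker (t ξ : ℝ) : ℝ := if ξ = 0 then t else Real.sin (t * lam ξ) / lam ξ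

/-- Fourier side linear propagator `Ŝ(t)(v₀,v₁)`. -/
def Shat (t : ℝ) (v₀ v₁ : ℝ → ℂ) (ξ : ℝ) : ℂ :=
  (Real.cos (t * lam ξ) : ℂ) * v₀ ξ + (mker t ξ : ℂ) * v₁ ξ

/-- Convolution of complex valued functions on `ℝ`. -/
def conv (f g : ℝ → ℂ) (ξ : ℝ) : ℂ := ∫ η, f η * g (ξ - η)

/-- Iterated convolution of a list of functions. -/
def convList : List (ℝ → ℂ) → ℝ → ℂ
  | [] => fun _ => 0
  | [f] => f
  | f :: g :: fs => conv f (convList (g :: fs))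

/-- Fourier side Duhamel operator `Î_k`. -/
def Ihat (k : ℕ) (w : Fin k → ℝ → ℝ → ℂ) (t ξ : ℝ) : ℂ :=
  ∫ t' in (0:ℝ)..t,
    ((Real.sin ((t - t') * lam ξ) * lam ξ : ℝ) : ℂ) * convList (List.ofFn fun i => w i t') ξ

/-- Continuity of a curve of functions with respect to the `L¹` norm, on `[0,T]`. -/
def ContinuousL1On (T : ℝ) (v : ℝ → ℝ → ℂ) : Prop :=
  ∀ t₀ ∈ Set.Icc (0 : ℝ) T,
    Tendsto (fun t => eLpNorm (fun ξ => v t ξ - v t₀ ξ) 1 volume)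
      (nhdsWithin t₀ (Set.Icc (0 : ℝ) T)) (nhds 0)

/-- Fourier-side solution of the generalized improved Boussinesq equation with
nonlinearity `u^k` and data `(v₀, v₁)` on `[0, T]`. -/
def IsGIBqSol (k : ℕ) (T : ℝ) (v₀ v₁ : ℝ → ℂ) (v : ℝ → ℝ → ℂ) : Prop :=
  (∀ t ∈ Set.Icc (0 : ℝ) T, Integrable (v t)) ∧
  ContinuousL1On T v ∧
  ∀ t ∈ Set.Icc (0 : ℝ) T,
    ∀ᵐ ξ ∂volume, v t ξ = Shat t v₀ v₁ ξ + Ihat k (fun _ => v) t ξ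

/-- Picard iterates `Ξ̂_j` for gIBq on the Fourier side. -/
def Xi (k : ℕ) (v₀ v₁ : ℝ → ℂ) : ℕ → ℝ → ℝ → ℂ
  | 0 => fun t => Shat t v₀ v₁
  | (j+1) => fun t ξ =>
      ∑ p ∈ (Finset.Nat.antidiagonalTuple k j).attach,
        Ihat k (fun i => Xi k v₀ v₁ (p.1 i)) t ξ
decreasing_by
  have hsum := Finset.Nat.mem_antidiagonalTuple.mp p.2
  have hle : p.1 i ≤ j := by
    calc p.1 i ≤ ∑ i', p.1 i' :=
          Finset.single_le_sum (fun _ _ => Nat.zero_le _) (Finset.mem_univ i)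
      _ = j := hsum
  omega

/-- The `FL^{s,p}` norm on the Fourier side: `‖⟨ξ⟩^s w‖_{L^p}`. -/
def FLnorm (s : ℝ) (p : ℝ≥0∞) (w : ℝ → ℂ) : ℝ≥0∞ :=
  eLpNorm (fun ξ => jbw s ξ * ‖w ξ‖) p volume

end

noncomputable section

/-- The frequency set `Ω = ⋃_{η ∈ {-2N,-N,N,2N}} [η - A/2, η + A/2]`. -/
def Omeg (N A : ℝ) : Set ℝ :=
  ⋃ η ∈ ({-(2 * N), -N, N, 2 * N} : Set ℝ), Set.Icc (η - A / 2) (η + A / 2)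

/-- The Fourier-side perturbation `φ̂ = R·χ_Ω`. -/
def phihat (R N A : ℝ) : ℝ → ℂ := Set.indicator (Omeg N A) fun _ => (R : ℂ)

end

/-- Real version of the free evolution of `phihat`. -/
noncomputable def gW (R N A t ξ : ℝ) : ℝ :=
  Real.cos (t * lam ξ) * Set.indicator (Omeg N A) (fun _ => R) ξ

/-- Real version of the `(n+1)`-fold self-convolution. -/
noncomputable def gC (R N A : ℝ) : ℕ → ℝ → ℝ → ℝ
  | 0 => fun t ξ => gW R N A t ξ
  | n + 1 => fun t ξ => ∫ η, gW R N A t η * gC R N A n t (ξ - η)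

lemma meas_comp2 {α : Type*} [MeasurableSpace α] (F : ℝ → ℝ → ℝ)
    (h : Measurable (fun p : ℝ × ℝ => F p.1 p.2)) {a b : α → ℝ} (ha : Measurable a)
    (hb : Measurable b) : Measurable (fun x => F (a x) (b x)) :=
  h.comp (ha.prodMk hb)

lemma meas_Omeg (N A : ℝ) : MeasurableSet (Omeg N A) := by
  unfold Omeg
  exact Set.Finite.measurableSet_biUnion (Set.toFinite _) (fun _ _ => measurableSet_Icc)

lemma vol_Omeg (N A : ℝ) : volume (Omeg N A) < ⊤ := by
  unfold Omeg
  refine measure_biUnion_lt_top (Set.toFinite _) ?_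
  intro i _
  exact measure_Icc_lt_top

lemma lam_sq (ξ : ℝ) : lam ξ ^ 2 = ξ ^ 2 / (1 + ξ ^ 2) := by
  unfold lam
  rw [← Real.sqrt_eq_rpow, div_pow, sq_abs, Real.sq_sqrt (by positivity)]

lemma lam_nonneg (ξ : ℝ) : 0 ≤ lam ξ := by unfold lam; positivity

lemma lam_le_one (ξ : ℝ) : lam ξ ≤ 1 := by
  have h : lam ξ ^ 2 ≤ 1 := by
    rw [lam_sq, div_le_one (by positivity)]; linarith
  nlinarith [lam_nonneg ξ]

lemma meas_lam : Measurable lam := by unfold lam; fun_prop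

lemma gW_meas (R N A : ℝ) : Measurable (fun p : ℝ × ℝ => gW R N A p.1 p.2) := by
  unfold gW
  have := meas_lam
  have h2 : Measurable (Set.indicator (Omeg N A) (fun _ : ℝ => R)) :=
    measurable_const.indicator (meas_Omeg N A)
  fun_prop

lemma gW_abs_le {R : ℝ} (hR : 0 < R) (N A t ξ : ℝ) :
    |gW R N A t ξ| ≤ Set.indicator (Omeg N A) (fun _ => R) ξ := by
  have h0 : 0 ≤ Set.indicator (Omeg N A) (fun _ => R) ξ :=
    Set.indicator_nonneg (fun _ _ => hR.le) ξ
  unfold gW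
  rw [abs_mul, abs_of_nonneg h0]
  exact mul_le_of_le_one_left h0 (Real.abs_cos_le_one _)

lemma cos_half {t : ℝ} (h0 : 0 ≤ t) (h1 : t ≤ 1) (ξ : ℝ) : 1 / 2 ≤ Real.cos (t * lam ξ) := by
  have h := Real.one_sub_sq_div_two_le_cos (x := t * lam ξ)
  have h2 : t * lam ξ ≤ 1 := mul_le_one₀ h1 (lam_nonneg ξ) (lam_le_one ξ)
  have h3 : 0 ≤ t * lam ξ := mul_nonneg h0 (lam_nonneg ξ)
  nlinarith

lemma gW_nonneg {R : ℝ} (hR : 0 < R) (N A : ℝ) {t : ℝ} (h0 : 0 ≤ t) (h1 : t ≤ 1) (ξ : ℝ) :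
    0 ≤ gW R N A t ξ :=
  mul_nonneg (by linarith [cos_half h0 h1 ξ]) (Set.indicator_nonneg (fun _ _ => hR.le) ξ)

lemma gW_lower {R : ℝ} (hR : 0 < R) (N A : ℝ) {t : ℝ} (h0 : 0 ≤ t) (h1 : t ≤ 1) {ξ : ℝ}
    (hξ : ξ ∈ Omeg N A) : R / 2 ≤ gW R N A t ξ := by
  unfold gW
  rw [Set.indicator_of_mem hξ]
  nlinarith [cos_half h0 h1 ξ]

lemma gC_meas (R N A : ℝ) (n : ℕ) : Measurable (fun p : ℝ × ℝ => gC R N A n p.1 p.2) := by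
  induction n with
  | zero => exact gW_meas R N A
  | succ n ih =>
    have h : Measurable (fun q : (ℝ × ℝ) × ℝ =>
        gW R N A q.1.1 q.2 * gC R N A n q.1.1 (q.1.2 - q.2)) := by
      refine Measurable.mul ?_ ?_
      · exact meas_comp2 (gW R N A) (gW_meas R N A) (by fun_prop) (by fun_prop)
      · exact meas_comp2 (gC R N A n) ih (by fun_prop) (by fun_prop)
    exact (h.stronglyMeasurable.integral_prod_right (ν := volume)).measurable

lemma ind_integrable (R N A : ℝ) :
    Integrable (Set.indicator (Omeg N A) (fun _ : ℝ => R)) := by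
  rw [integrable_indicator_iff (meas_Omeg N A)]
  exact integrableOn_const (vol_Omeg N A).ne

lemma gC_bdd {R : ℝ} (hR : 0 < R) (N A : ℝ) (n : ℕ) :
    ∃ C, 0 ≤ C ∧ ∀ t ξ, |gC R N A n t ξ| ≤ C := by
  induction n with
  | zero =>
    refine ⟨R, hR.le, fun t ξ => (gW_abs_le hR N A t ξ).trans ?_⟩
    exact Set.indicator_le_self' (fun _ _ => hR.le) ξ
  | succ n ih =>
    obtain ⟨C, hC, h⟩ := ih
    refine ⟨∫ η, Set.indicator (Omeg N A) (fun _ : ℝ => R) η * C,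
      integral_nonneg fun η => mul_nonneg (Set.indicator_nonneg (fun _ _ => hR.le) η) hC, ?_⟩
    intro t ξ
    rw [← Real.norm_eq_abs]
    refine norm_integral_le_of_norm_le ((ind_integrable R N A).mul_const C) ?_
    refine Eventually.of_forall fun η => ?_
    rw [Real.norm_eq_abs, abs_mul]
    exact mul_le_mul (gW_abs_le hR N A t η) (h t _) (abs_nonneg _)
      (Set.indicator_nonneg (fun _ _ => hR.le) η)

lemma gC_integrable {R : ℝ} (hR : 0 < R) (N A : ℝ) (n : ℕ) (t ξ : ℝ) :
    Integrable (fun η => gW R N A t η * gC R N A n t (ξ - η)) := by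
  obtain ⟨C, hC, h⟩ := gC_bdd hR N A n
  refine ((ind_integrable R N A).mul_const C).mono' ?_ ?_
  · refine Measurable.aestronglyMeasurable (Measurable.mul ?_ ?_)
    · exact meas_comp2 (gW R N A) (gW_meas R N A) (by fun_prop) (by fun_prop)
    · exact meas_comp2 (gC R N A n) (gC_meas R N A n) (by fun_prop) (by fun_prop)
  · refine Eventually.of_forall fun η => ?_
    rw [Real.norm_eq_abs, abs_mul]
    exact mul_le_mul (gW_abs_le hR N A t η) (h t _) (abs_nonneg _)
      (Set.indicator_nonneg (fun _ _ => hR.le) η)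

lemma gC_nonneg {R : ℝ} (hR : 0 < R) (N A : ℝ) {t : ℝ} (h0 : 0 ≤ t) (h1 : t ≤ 1) (n : ℕ) (ξ : ℝ) :
    0 ≤ gC R N A n t ξ := by
  induction n generalizing ξ with
  | zero => exact gW_nonneg hR N A h0 h1 ξ
  | succ n ih => exact integral_nonneg fun η => mul_nonneg (gW_nonneg hR N A h0 h1 η) (ih _)

lemma mem_Omeg {N A a ξ : ℝ} (ha : a ∈ ({-(2 * N), -N, N, 2 * N} : Set ℝ))
    (h1 : a - A / 2 ≤ ξ) (h2 : ξ ≤ a + A / 2) : ξ ∈ Omeg N A :=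
  Set.mem_biUnion ha ⟨h1, h2⟩

/-- One convolution step. -/
lemma gC_step {R : ℝ} (hR : 0 < R) {N A : ℝ} (hA : 0 < A) {t : ℝ} (h0 : 0 ≤ t) (h1 : t ≤ 1)
    (n : ℕ) (B : ℝ) (hB : 0 ≤ B) (h : ∀ ξ ∈ Omeg N A, B ≤ gC R N A n t ξ) (b b' ξ : ℝ)
    (hb : b ∈ ({-(2 * N), -N, N, 2 * N} : Set ℝ)) (hb' : b' ∈ ({-(2 * N), -N, N, 2 * N} : Set ℝ))
    (hl : b + b' - A / 2 ≤ ξ) (hu : ξ ≤ b + b' + A / 2) :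
    (R / 2) * (A / 2) * B ≤ gC R N A (n + 1) t ξ := by
  obtain ⟨l, hl1, hl2, hl3, hl4⟩ : ∃ l, b - A / 2 ≤ l ∧ l ≤ b ∧
      ξ - l ≤ b' + A / 2 ∧ b' - A / 2 ≤ ξ - (l + A / 2) := by
    rcases le_total ξ (b + b') with hx | hx
    · exact ⟨b - A / 2, by linarith, by linarith, by linarith, by linarith⟩
    · exact ⟨b, by linarith, by linarith, by linarith, by linarith⟩
  have hint := gC_integrable hR N A n t ξ
  have hnn : ∀ η, 0 ≤ gW R N A t η * gC R N A n t (ξ - η) := fun η =>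
    mul_nonneg (gW_nonneg hR N A h0 h1 η) (gC_nonneg hR N A h0 h1 n _)
  have e1 : ∫ η in Set.Icc l (l + A / 2), gW R N A t η * gC R N A n t (ξ - η)
      ≤ gC R N A (n + 1) t ξ :=
    setIntegral_le_integral hint (Eventually.of_forall hnn)
  refine le_trans ?_ e1
  have e2 : ∫ _η in Set.Icc l (l + A / 2), (R / 2 * B)
      ≤ ∫ η in Set.Icc l (l + A / 2), gW R N A t η * gC R N A n t (ξ - η) := by
    refine setIntegral_mono_on (integrableOn_const measure_Icc_lt_top.ne) hint.integrableOn
      measurableSet_Icc ?_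
    rintro η ⟨hη1, hη2⟩
    exact mul_le_mul
      (gW_lower hR N A h0 h1 (mem_Omeg hb (by linarith) (by linarith)))
      (h _ (mem_Omeg hb' (by linarith) (by linarith))) hB (gW_nonneg hR N A h0 h1 η)
  refine le_trans (le_of_eq ?_) e2
  rw [setIntegral_const, Real.volume_real_Icc_of_le (by linarith), smul_eq_mul]
  ring

lemma gC_lower {R : ℝ} (hR : 0 < R) {N A : ℝ} (hA : 0 < A) {t : ℝ} (h0 : 0 ≤ t) (h1 : t ≤ 1)
    (n : ℕ) : ∀ ξ ∈ Omeg N A, (R / 2) ^ (n + 1) * (A / 2) ^ n ≤ gC R N A n t ξ := by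
  induction n with
  | zero =>
    intro ξ hξ
    simpa [gC] using gW_lower hR N A h0 h1 hξ
  | succ n ih =>
    intro ξ hξ
    have hstep := gC_step hR hA h0 h1 n _ (by positivity) ih
    have e : (R / 2) ^ (n + 1 + 1) * (A / 2) ^ (n + 1)
      = (R / 2) * (A / 2) * ((R / 2) ^ (n + 1) * (A / 2) ^ n) := by ring
    rw [e]
    obtain ⟨a, ha, hx1, hx2⟩ := Set.mem_iUnion₂.1 hξ
    simp only [Set.mem_insert_iff, Set.mem_singleton_iff] at ha
    rcases ha with rfl | rfl | rfl | rfl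
    · exact hstep (-N) (-N) ξ (by simp) (by simp) (by linarith) (by linarith)
    · exact hstep (-(2 * N)) N ξ (by simp) (by simp) (by linarith) (by linarith)
    · exact hstep (2 * a) (-a) ξ (by simp) (by simp) (by linarith) (by linarith)
    · exact hstep N N ξ (by simp) (by simp) (by linarith) (by linarith)

lemma gC_lower_zero {R : ℝ} (hR : 0 < R) {N A : ℝ} (hA : 0 < A) {t : ℝ} (h0 : 0 ≤ t) (h1 : t ≤ 1)
    (n : ℕ) (ξ : ℝ) (hl : - (A / 2) ≤ ξ) (hu : ξ ≤ A / 2) :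
    (R / 2) ^ (n + 2) * (A / 2) ^ (n + 1) ≤ gC R N A (n + 1) t ξ := by
  have e : (R / 2) ^ (n + 2) * (A / 2) ^ (n + 1)
      = (R / 2) * (A / 2) * ((R / 2) ^ (n + 1) * (A / 2) ^ n) := by ring
  rw [e]
  exact gC_step hR hA h0 h1 n _ (by positivity) (gC_lower hR hA h0 h1 n) N (-N) ξ
    (by simp) (by simp) (by linarith) (by linarith)

lemma Shat_eq (R N A t : ℝ) :
    Shat t (phihat R N A) 0 = fun ξ => ((gW R N A t ξ : ℝ) : ℂ) := by
  funext ξ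
  unfold Shat phihat gW
  by_cases h : ξ ∈ Omeg N A <;> simp [h]

lemma convList_eq (R N A t : ℝ) (n : ℕ) :
    convList (List.replicate (n + 1) (Shat t (phihat R N A) 0))
      = fun ξ => ((gC R N A n t ξ : ℝ) : ℂ) := by
  induction n with
  | zero => simp [convList, gC, Shat_eq]
  | succ n ih =>
    rw [List.replicate_succ, List.replicate_succ, convList, ← List.replicate_succ, ih, Shat_eq]
    funext ξ
    simp only [conv, gC]
    rw [← integral_complex_ofReal]
    simp

lemma Xi_eq (R N A T : ℝ) (n : ℕ) (ξ : ℝ) :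
    Xi (n + 1) (phihat R N A) 0 1 T ξ
      = ((∫ t in (0:ℝ)..T, Real.sin ((T - t) * lam ξ) * lam ξ * gC R N A n t ξ : ℝ) : ℂ) := by
  have h1 : Xi (n + 1) (phihat R N A) 0 1 T ξ
      = Ihat (n + 1) (fun _ => fun t => Shat t (phihat R N A) 0) T ξ := by
    rw [Xi]
    beta_reduce
    rw [Finset.sum_attach (Finset.Nat.antidiagonalTuple (n + 1) 0)
      (fun p => Ihat (n + 1) (fun i => Xi (n + 1) (phihat R N A) 0 (p i)) T ξ)]
    rw [Finset.Nat.antidiagonalTuple_zero_right, Finset.sum_singleton]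
    congr 1
    funext i
    simp only [Pi.zero_apply]
    rw [Xi]
  rw [h1, Ihat, ← intervalIntegral.integral_ofReal]
  congr 1
  funext t
  rw [List.ofFn_const, convList_eq]
  push_cast
  ring

lemma Xi_lower {R : ℝ} (hR : 0 < R) {N A T : ℝ} (hA : 1 ≤ A) (hT : 0 < T) (hT1 : T ≤ 1)
    (n : ℕ) (ξ : ℝ) (hl : A / 4 ≤ ξ) (hu : ξ ≤ A / 2) :
    T ^ 2 / 68 * ((R / 2) ^ (n + 2) * (A / 2) ^ (n + 1))
      ≤ ‖Xi (n + 2) (phihat R N A) 0 1 T ξ‖ := by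
  set B := (R / 2) ^ (n + 2) * (A / 2) ^ (n + 1) with hBdef
  have hB : 0 ≤ B := by positivity
  rw [Xi_eq, Complex.norm_real, Real.norm_eq_abs]
  refine le_trans ?_ (le_abs_self _)
  have hlam : 1 / 17 ≤ lam ξ ^ 2 := by
    rw [lam_sq, div_le_div_iff₀ (by norm_num) (by positivity)]
    nlinarith
  have e0 : ∫ t in (0:ℝ)..T, (T - t) * (B / 34) = T ^ 2 / 68 * B := by
    rw [intervalIntegral.integral_mul_const, intervalIntegral.integral_sub (by simp) (by simp),
      integral_id, intervalIntegral.integral_const, smul_eq_mul]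
    ring
  rw [← e0]
  refine intervalIntegral.integral_mono_on hT.le ?_ ?_ ?_
  · exact Continuous.intervalIntegrable (by fun_prop) _ _
  · obtain ⟨C, hC, hb⟩ := gC_bdd hR N A (n + 1)
    rw [intervalIntegrable_iff]
    refine Measure.integrableOn_of_bounded (M := 1 * 1 * C) (by simp) ?_ ?_
    · refine Measurable.aestronglyMeasurable (Measurable.mul (by fun_prop) ?_)
      exact meas_comp2 (gC R N A (n + 1)) (gC_meas R N A (n + 1)) (by fun_prop) (by fun_prop)
    · refine Eventually.of_forall fun t => ?_
      rw [Real.norm_eq_abs, abs_mul, abs_mul, abs_of_nonneg (lam_nonneg ξ)]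
      have := hb t ξ
      have h2 := lam_le_one ξ
      have h3 := lam_nonneg ξ
      have h4 := Real.abs_sin_le_one ((T - t) * lam ξ)
      gcongr
  · rintro t ⟨ht0, ht1⟩
    have hg := gC_lower_zero (N := N) hR (by linarith : 0 < A) ht0 (ht1.trans hT1) n ξ
      (by linarith) hu
    have hx0 : 0 ≤ (T - t) * lam ξ := mul_nonneg (by linarith) (lam_nonneg ξ)
    have hx1 : (T - t) * lam ξ ≤ 1 := mul_le_one₀ (by linarith) (lam_nonneg ξ) (lam_le_one ξ)
    have hs : (T - t) * lam ξ / 2 ≤ Real.sin ((T - t) * lam ξ) := by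
      have h := Real.mul_le_sin hx0 (by linarith [Real.pi_gt_three])
      refine le_trans ?_ h
      have h2 : 1 / 2 ≤ 2 / Real.pi := by
        rw [div_le_div_iff₀ (by norm_num) Real.pi_pos]; linarith [Real.pi_le_four]
      nlinarith
    have h5 : (T - t) / 34 ≤ Real.sin ((T - t) * lam ξ) * lam ξ := by
      have := mul_le_mul_of_nonneg_right hs (lam_nonneg ξ)
      nlinarith [mul_le_mul_of_nonneg_left hlam (by linarith : 0 ≤ T - t)]
    calc (T - t) * (B / 34) = (T - t) / 34 * B := by ring
      _ ≤ _ := mul_le_mul h5 hg hB (le_trans (by linarith) h5)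

lemma jbw_lower {s : ℝ} (hs : s < 0) {A ξ : ℝ} (hA : 1 ≤ A) (hl : A / 4 ≤ ξ) (hu : ξ ≤ A / 2) :
    2 ^ (s / 2) * A ^ s ≤ jbw s ξ := by
  have e : (2:ℝ) ^ (s / 2) * A ^ s = (2 * A ^ 2) ^ (s / 2) := by
    rw [Real.mul_rpow (by norm_num) (by positivity), ← Real.rpow_natCast A 2,
      ← Real.rpow_mul (by linarith)]
    congr 2
    push_cast; ring
  rw [e]
  unfold jbw
  refine Real.rpow_le_rpow_of_nonpos (by positivity) ?_ (by linarith)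
  nlinarith

/-- High-to-low energy transfer lower bound for the first Picard iterate in `H^s`:
`‖⟨ξ⟩^s Ξ̂₁(φ̂, 0)(T)‖_{L²} ≥ c·R^k·T²·A^{k - 1/2 + s}`. -/
theorem first_picard_lower_bound_Hs (k : ℕ) (hk : 2 ≤ k) (s : ℝ) (hs : s < 0) :
    ∃ c δ : ℝ, 0 < c ∧ 0 < δ ∧
      ∀ R A N T : ℝ, 0 < R → 1 ≤ A → A ≤ δ * N → 0 < T → T ≤ δ →
        ENNReal.ofReal (c * R ^ k * T ^ 2 * A ^ ((k : ℝ) - 1 / 2 + s)) ≤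
          FLnorm s 2 (Xi k (phihat R N A) 0 1 T) := by
  obtain ⟨m, rfl⟩ : ∃ m, k = m + 2 := ⟨k - 2, by omega⟩
  refine ⟨2 ^ (s / 2) * ((1 / 68) * ((1 / 2) ^ (m + 2) * (1 / 2) ^ (m + 1))) *
    (1 / 4 : ℝ) ^ (1 / 2 : ℝ), 1, by positivity, one_pos, ?_⟩
  intro R A N T hR hA _ hT hT1
  have hA0 : 0 < A := by linarith
  set D : ℝ := 2 ^ (s / 2) * A ^ s * (T ^ 2 / 68 * ((R / 2) ^ (m + 2) * (A / 2) ^ (m + 1)))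
    with hD
  have hD0 : 0 ≤ D := by positivity
  have key : eLpNorm (Set.indicator (Set.Icc (A / 4) (A / 2)) (fun _ : ℝ => D)) 2 volume
      ≤ FLnorm s 2 (Xi (m + 2) (phihat R N A) 0 1 T) := by
    unfold FLnorm
    refine eLpNorm_mono fun ξ => ?_
    by_cases hξ : ξ ∈ Set.Icc (A / 4) (A / 2)
    · rw [Set.indicator_of_mem hξ, Real.norm_of_nonneg hD0]
      refine le_trans ?_ (le_abs_self _)
      have h1 := jbw_lower hs hA hξ.1 hξ.2
      have h2 := Xi_lower (N := N) hR hA hT hT1 m ξ hξ.1 hξ.2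
      exact mul_le_mul h1 h2 (by positivity) (le_trans (by positivity) h1)
    · rw [Set.indicator_of_notMem hξ, norm_zero]; exact norm_nonneg _
  refine le_trans (le_of_eq ?_) key
  rw [eLpNorm_indicator_const measurableSet_Icc (by norm_num) (by norm_num), Real.volume_Icc,
    Real.enorm_eq_ofReal hD0, ENNReal.toReal_ofNat,
    ENNReal.ofReal_rpow_of_nonneg (by linarith) (by norm_num), ← ENNReal.ofReal_mul hD0]
  congr 1
  have e1 : A / 2 - A / 4 = 1 / 4 * A := by ring
  have e2 : A ^ (((m + 2 : ℕ) : ℝ) - 1 / 2 + s) = A ^ (m + 1) * A ^ (1 / 2 : ℝ) * A ^ s := by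
    rw [← Real.rpow_natCast, ← Real.rpow_add hA0, ← Real.rpow_add hA0]
    congr 1
    push_cast; ring
  rw [e1, e2, Real.mul_rpow (by norm_num) hA0.le, hD, div_pow R, div_pow A]
  simp only [one_div, inv_pow]
  field_simp
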